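/- The Evidence Protection Program yields protected data flow graphs: for every Copland phrase t and place p, the data flow graph C(epp(t,p,ξ),p,⟨⟩,ξ) is protected. -/

import Mathlib

namespace Copland

/-- Places are drawn from a countable set. -/
abbrev Place := ℕ
/-- Symbols (measurement/target identifiers) are drawn from a countable set. -/
abbrev Symb := ℕ

/-- Splitting specifications: `+` or `-`. -/
inductive Split where
  | plus
  | minus
deriving DecidableEq, Repr

/-- Copland phrases. -/
inductive Phrase where
  | meas : Symb → Place → Symb → Phrase          -- measurement  m q s
  | att  : Place → Phrase → Phrase               -- @_q [ t ]
  | copy : Phrase                                 -- _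
  | sign : Phrase                                 -- !
  | hash : Phrase                                 -- #
  | lseq : Phrase → Phrase → Phrase               -- t1 → t2
  | bseq : Split → Split → Phrase → Phrase → Phrase  -- t1 d1<d2 t2
  | bpar : Split → Split → Phrase → Phrase → Phrase  -- t1 d1~d2 t2
deriving DecidableEq, Repr

/-- Evidence terms. -/
inductive Evidence where
  | empty : Evidence                                          -- ξ
  | meas : Symb → Place → Symb → Place → List ℕ → Evidence → Evidence  -- m(ms(m,q,s),p,φ,e)
  | sig  : Evidence → Place → Evidence                        -- [[e]]_p
  | hash : Evidence → Place → Evidence                        -- #{e}_p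
  | seqc : Evidence → Evidence → Evidence                     -- e1 ;; e2
  | parc : Evidence → Evidence → Evidence                     -- e1 || e2
deriving DecidableEq, Repr

/-- The effect `d(e)` of a splitting specification on evidence. -/
def splitEv : Split → Evidence → Evidence
  | .plus, e => e
  | .minus, _ => .empty

/-- The Copland evidence semantics `E(t,p,φ,e)`. -/
def eval : Phrase → Place → List ℕ → Evidence → Evidence
  | .meas m q s, p, φ, e => .meas m q s p φ e
  | .copy, _, _, e => e
  | .sign, p, _, e => .sig e p
  | .hash, p, _, e => .hash e p
  | .att q t, _, φ, e => eval t q (1 :: φ) e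
  | .lseq t1 t2, p, φ, e => eval t2 p (2 :: φ) (eval t1 p (1 :: φ) e)
  | .bseq d1 d2 t1 t2, p, φ, e =>
      .seqc (eval t1 p (1 :: φ) (splitEv d1 e)) (eval t2 p (2 :: φ) (splitEv d2 e))
  | .bpar d1 d2 t1 t2, p, φ, e =>
      .parc (eval t1 p (1 :: φ) (splitEv d1 e)) (eval t2 p (2 :: φ) (splitEv d2 e))

/-- Join operators: sequential `<` or parallel `~`. -/
inductive JoinOp where
  | seqJ
  | parJ
deriving DecidableEq, Repr

/-- Event labels. -/
inductive Label where
  | msp   : Place → Evidence → Label                    -- p : msp(e)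
  | cpy   : Place → Evidence → Label                    -- p : cpy(e)
  | sig   : Place → Evidence → Label                    -- p : sig(e)
  | hsh   : Place → Evidence → Label                    -- p : hsh(e)
  | req   : Place → Place → Evidence → Label            -- p : req(q,e)
  | rpy   : Place → Place → Evidence → Label            -- p : rpy(q,e)
  | split : Place → Split → Split → Evidence → Label    -- p : split(d1,d2,e)
  | join  : Place → JoinOp → Evidence → Label           -- p : join(o,e)
deriving DecidableEq, Repr

/-- The (sending) place `ϱ(v)`: the place before the colon in the label. -/
def Label.place : Label → Place
  | .msp p _ => p
  | .cpy p _ => p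
  | .sig p _ => p
  | .hsh p _ => p
  | .req p _ _ => p
  | .rpy p _ _ => p
  | .split p _ _ _ => p
  | .join p _ _ => p

/-- The receiving place `ϱ'(v)`. -/
def Label.recvPlace : Label → Place
  | .req _ q _ => q
  | .rpy _ q _ => q
  | l => l.place

/-- The evidence `ε(v)`: the last argument of the label. -/
def Label.evid : Label → Evidence
  | .msp _ e => e
  | .cpy _ e => e
  | .sig _ e => e
  | .hsh _ e => e
  | .req _ _ e => e
  | .rpy _ _ e => e
  | .split _ _ _ e => e
  | .join _ _ e => e

/-- A measurement event is one whose label has the form `p : msp(e)`. -/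
def Label.IsMeas (l : Label) : Prop := ∃ p e, l = .msp p e

/-- A cross-place communication event is one with `ϱ(v) ≠ ϱ'(v)`. -/
def Label.IsCross (l : Label) : Prop := l.place ≠ l.recvPlace

/-- A data flow graph: events are the naturals `0, …, n-1`, with an input event,
an output event, flow edges, and a labeling. -/
structure DFG where
  n : ℕ
  vin : ℕ
  vout : ℕ
  edges : List (ℕ × ℕ)
  label : ℕ → Label

namespace DFG

/-- Well-formedness of a data flow graph: events are in range, the flow
relation is acyclic, and there is no edge into the input event nor out of
the output event. -/
def WF (G : DFG) : Prop :=
  G.vin < G.n ∧ G.vout < G.n ∧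
  (∀ pr ∈ G.edges, pr.1 < G.n ∧ pr.2 < G.n) ∧
  (∀ v, ¬ Relation.TransGen (fun a b => (a, b) ∈ G.edges) v v) ∧
  (∀ pr ∈ G.edges, pr.2 ≠ G.vin ∧ pr.1 ≠ G.vout)

/-- The single-event data flow graph. -/
def single (l : Label) : DFG :=
  { n := 1, vin := 0, vout := 0, edges := [], label := fun _ => l }

/-- Before-copy composition: the second graph's events are renumbered after the
first's, and a flow edge links the output of the first to the input of the second. -/
def seqComp (G1 G2 : DFG) : DFG :=
  { n := G1.n + G2.n
    vin := G1.vin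
    vout := G1.n + G2.vout
    edges := G1.edges ++ G2.edges.map (fun pr => (G1.n + pr.1, G1.n + pr.2)) ++
      [(G1.vout, G1.n + G2.vin)]
    label := fun i => if i < G1.n then G1.label i else G2.label (i - G1.n) }

/-- Branching composition: a split event, the two subgraphs (with a flow edge from
the split into the input of a subgraph exactly when the corresponding splitting
specification is `+`), and a join event receiving flow from both outputs. -/
def branch (sp jn : Label) (d1 d2 : Split) (G1 G2 : DFG) : DFG :=
  { n := G1.n + G2.n + 2
    vin := 0
    vout := G1.n + G2.n + 1
    edges :=
      G1.edges.map (fun pr => (pr.1 + 1, pr.2 + 1)) ++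
      G2.edges.map (fun pr => (pr.1 + 1 + G1.n, pr.2 + 1 + G1.n)) ++
      (if d1 = Split.plus then [(0, G1.vin + 1)] else []) ++
      (if d2 = Split.plus then [(0, G2.vin + 1 + G1.n)] else []) ++
      [(G1.vout + 1, G1.n + G2.n + 1), (G2.vout + 1 + G1.n, G1.n + G2.n + 1)]
    label := fun i =>
      if i = 0 then sp
      else if i < G1.n + 1 then G1.label (i - 1)
      else if i < G1.n + G2.n + 1 then G2.label (i - 1 - G1.n)
      else jn }

end DFG

/-- The Copland data flow semantics `C(t,p,φ,e)`. -/
def sem : Phrase → Place → List ℕ → Evidence → DFG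
  | .meas m q s, p, φ, e => .single (.msp p (.meas m q s p φ e))
  | .copy, p, _, e => .single (.cpy p e)
  | .sign, p, _, e => .single (.sig p (.sig e p))
  | .hash, p, _, e => .single (.hsh p (.hash e p))
  | .att q t, p, φ, e =>
      (DFG.single (.req p q e)).seqComp
        ((sem t q (1 :: φ) e).seqComp (.single (.rpy q p (eval t q (1 :: φ) e))))
  | .lseq t1 t2, p, φ, e =>
      (sem t1 p (1 :: φ) e).seqComp (sem t2 p (2 :: φ) (eval t1 p (1 :: φ) e))
  | .bseq d1 d2 t1 t2, p, φ, e =>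
      DFG.branch (.split p d1 d2 e)
        (.join p .seqJ (eval (.bseq d1 d2 t1 t2) p φ e)) d1 d2
        (sem t1 p (1 :: φ) (splitEv d1 e)) (sem t2 p (2 :: φ) (splitEv d2 e))
  | .bpar d1 d2 t1 t2, p, φ, e =>
      DFG.branch (.split p d1 d2 e)
        (.join p .parJ (eval (.bpar d1 d2 t1 t2) p φ e)) d1 d2
        (sem t1 p (1 :: φ) (splitEv d1 e)) (sem t2 p (2 :: φ) (splitEv d2 e))

namespace DFG

/-- A path of a data flow graph: a nonempty sequence of events of the graph
successively related by flow edges. -/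
def IsPath (G : DFG) (π : List ℕ) : Prop :=
  π ≠ [] ∧ (∀ v ∈ π, v < G.n) ∧ π.Chain' (fun a b => (a, b) ∈ G.edges)

/-- One step of the tamper set computation. -/
def tsStep (G : DFG) (s : Set Place) (v : ℕ) : Set Place :=
  match G.label v with
  | .sig p _ => {p} ∩ s
  | _ => s

/-- The tamper set `ts(π)` of a path: `ts(⟨v⟩)` is the set of all places if `v` is a
measurement event and `∅` otherwise; `ts(π § v) = {p} ∩ ts(π)` if `ℓ(v) = p:sig(e)`,
and `ts(π § v) = ts(π)` otherwise. -/
def ts (G : DFG) (π : List ℕ) : Set Place :=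
  match π with
  | [] => ∅
  | v :: rest =>
      rest.foldl (tsStep G)
        (match G.label v with
          | .msp _ _ => Set.univ
          | _ => ∅)

/-- A path is `p`-signing iff every signature event on it occurs at `p`. -/
def Signing (G : DFG) (π : List ℕ) (p : Place) : Prop :=
  ∀ v ∈ π, ∀ q e, G.label v = .sig q e → q = p

/-- A path `π = ⟨v, …, v'⟩` permits tampering (at `v'` with the evidence from `v`)
iff (1) `v` is a measurement event, (2) the length of `π` exceeds 1, and
(3) `π` is `ϱ(v')`-signing or `ϱ'(v')`-signing. -/
def PermitsTamper (G : DFG) (π : List ℕ) : Prop :=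
  (∀ v, π.head? = some v → (G.label v).IsMeas) ∧
  1 < π.length ∧
  (∀ v', π.getLast? = some v' →
    G.Signing π (G.label v').place ∨ G.Signing π (G.label v').recvPlace)

/-- A path `⟨v1,…,vn⟩` is local to place `p` iff every interior event has both
sending and receiving place `p`, and each endpoint has sending or receiving place `p`. -/
def LocalTo (G : DFG) (π : List ℕ) (p : Place) : Prop :=
  (∀ i v, 0 < i → i + 1 < π.length → π[i]? = some v →
      (G.label v).place = p ∧ (G.label v).recvPlace = p) ∧
  (∀ v, π.head? = some v → (G.label v).place = p ∨ (G.label v).recvPlace = p) ∧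
  (∀ v, π.getLast? = some v → (G.label v).place = p ∨ (G.label v).recvPlace = p)

/-- `π` is a path of `G` from `v` to `v'`. -/
def PathBetween (G : DFG) (v v' : ℕ) (π : List ℕ) : Prop :=
  G.IsPath π ∧ π.head? = some v ∧ π.getLast? = some v'

/-- A set `S` of events of `G` is a tamper strategy for `v` iff every path from `v`
to the output event of `G` contains an event `v' ∈ S` such that the prefix
`⟨v, …, v'⟩` of the path permits tampering. -/
def TamperStrategy (G : DFG) (S : Set ℕ) (v : ℕ) : Prop :=
  (∀ w ∈ S, w < G.n) ∧
  ∀ π, G.PathBetween v G.vout π →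
    ∃ v' ∈ S, ∃ π', π' <+: π ∧ π'.getLast? = some v' ∧ G.PermitsTamper π'

/-- `S` is a minimal tamper strategy for `v` iff it is a tamper strategy for `v` and
every tamper strategy for `v` included in `S` equals `S`. -/
def MinimalTamperStrategy (G : DFG) (S : Set ℕ) (v : ℕ) : Prop :=
  G.TamperStrategy S v ∧ ∀ S', G.TamperStrategy S' v → S' ⊆ S → S' = S

/-- A path `π = ⟨v1,…,vn⟩` is protected iff either `v1` is not a measurement event,
or for every `1 < i ≤ n`, if `vi` is a cross-place communication event then
`ts(⟨v1,…,vi⟩) ⊆ {ϱ(vi)}`. -/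
def ProtectedPath (G : DFG) (π : List ℕ) : Prop :=
  (∀ v, π.head? = some v → ¬ (G.label v).IsMeas) ∨
  (∀ i v, 0 < i → i < π.length → π[i]? = some v → (G.label v).IsCross →
      G.ts (π.take (i + 1)) ⊆ {(G.label v).place})

/-- A data flow graph is protected iff all of its paths are protected. -/
def Protected (G : DFG) : Prop :=
  ∀ π, G.IsPath π → G.ProtectedPath π

end DFG

/-- The tamper places function `τ` on evidence. -/
def tau : Evidence → Set Place
  | .empty => ∅
  | .meas _ _ _ _ _ _ => Set.univ
  | .hash e _ => tau e
  | .sig e p => {p} ∩ tau e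
  | .seqc e1 e2 => tau e1 ∪ tau e2
  | .parc e1 e2 => tau e1 ∪ tau e2

open scoped Classical in
/-- The Evidence Protection Program `epp(t,p,e)`. -/
noncomputable def epp : Phrase → Place → Evidence → Phrase
  | .meas m q s, _, _ => .meas m q s
  | .copy, _, _ => .copy
  | .sign, _, _ => .sign
  | .hash, _, _ => .hash
  | .lseq t1 t2, p, e =>
      .lseq (epp t1 p e) (epp t2 p (eval (epp t1 p e) p [] e))
  | .att q t, p, e =>
      if q = p then .att q (epp t p e)
      else if tau e ⊆ {p} then
        if tau (eval (epp t q e) q [] e) ⊆ {q} then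
          .att q (epp t q e)
        else
          .att q (.lseq (epp t q e) .sign)
      else
        if tau (eval (epp t q (.sig e p)) q [] (.sig e p)) ⊆ {q} then
          .lseq .sign (.att q (epp t q (.sig e p)))
        else
          .lseq .sign (.att q (.lseq (epp t q (.sig e p)) .sign))
  | .bseq d1 d2 t1 t2, p, e =>
      .bseq d1 d2 (epp t1 p (splitEv d1 e)) (epp t2 p (splitEv d2 e))
  | .bpar d1 d2 t1 t2, p, e =>
      .bpar d1 d2 (epp t1 p (splitEv d1 e)) (epp t2 p (splitEv d2 e))

end Copland

namespace Copland

/-- The effect of an event with label `l` on a tamper set. -/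
def Label.tamperStep (s : Set Place) : Label → Set Place
  | .sig p _ => {p} ∩ s
  | _ => s

theorem Label.tamperStep_mono {s t : Set Place} (h : s ⊆ t) (l : Label) :
    l.tamperStep s ⊆ l.tamperStep t := by
  cases l <;> simp only [Label.tamperStep] <;>
    first | exact h | exact Set.inter_subset_inter_right _ h

theorem DFG.tsStep_eq (G : DFG) (s : Set Place) (v : ℕ) :
    G.tsStep s v = (G.label v).tamperStep s := by
  unfold DFG.tsStep Label.tamperStep
  rfl

theorem DFG.ts_append_singleton (G : DFG) {π : List ℕ} (hπ : π ≠ []) (v : ℕ) :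
    G.ts (π ++ [v]) = (G.label v).tamperStep (G.ts π) := by
  cases π with
  | nil => exact absurd rfl hπ
  | cons a l => simp [DFG.ts, DFG.tsStep_eq]

/-- `G` transforms evidence `e` into evidence `e'`, and along every flow edge the tamper
places of the evidence shrink at most as the tamper set of a path does. -/
structure DFG.TracksTamper (G : DFG) (e e' : Evidence) : Prop where
  vin_lt : G.vin < G.n
  vout_lt : G.vout < G.n
  edge_lt : ∀ a b, (a, b) ∈ G.edges → a < G.n ∧ b < G.n
  input : (G.label G.vin).tamperStep (tau e) ⊆ tau (G.label G.vin).evid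
  output : (G.label G.vout).evid = e'
  flow : ∀ a b, (a, b) ∈ G.edges →
    (G.label b).tamperStep (tau (G.label a).evid) ⊆ tau (G.label b).evid
  meas : ∀ v < G.n, (G.label v).IsMeas → tau (G.label v).evid = Set.univ

/-- Every cross-place communication event carries evidence that can be tampered with
only at its sending place. -/
def DFG.CrossSafe (G : DFG) : Prop :=
  ∀ v < G.n, (G.label v).IsCross → tau (G.label v).evid ⊆ {(G.label v).place}

theorem DFG.TracksTamper.single {l : Label} {e e' : Evidence}
    (hin : l.tamperStep (tau e) ⊆ tau l.evid) (hout : l.evid = e')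
    (hm : l.IsMeas → tau l.evid = Set.univ) : (DFG.single l).TracksTamper e e' where
  vin_lt := Nat.one_pos
  vout_lt := Nat.one_pos
  edge_lt := by simp [DFG.single]
  input := hin
  output := hout
  flow := by simp [DFG.single]
  meas := fun _ _ => hm

theorem DFG.TracksTamper.seqComp {G₁ G₂ : DFG} {e₁ e₂ e₃ : Evidence}
    (h₁ : G₁.TracksTamper e₁ e₂) (h₂ : G₂.TracksTamper e₂ e₃) :
    (G₁.seqComp G₂).TracksTamper e₁ e₃ where
  vin_lt := Nat.lt_add_right _ h₁.vin_lt
  vout_lt := Nat.add_lt_add_left h₂.vout_lt _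
  edge_lt := by
    intro a b hab
    simp only [DFG.seqComp, List.mem_append, List.mem_map, List.mem_singleton, Prod.exists,
      Prod.mk.injEq] at hab ⊢
    have := h₁.vout_lt
    have := h₂.vin_lt
    rcases hab with (hab | ⟨c, d, hcd, rfl, rfl⟩) | ⟨rfl, rfl⟩
    · have := h₁.edge_lt a b hab
      omega
    · have := h₂.edge_lt c d hcd
      omega
    · omega
  input := by simpa [DFG.seqComp, h₁.vin_lt] using h₁.input
  output := by simpa [DFG.seqComp] using h₂.output
  flow := by
    intro a b hab
    simp only [DFG.seqComp, List.mem_append, List.mem_map, List.mem_singleton, Prod.exists,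
      Prod.mk.injEq] at hab
    rcases hab with (hab | ⟨c, d, hcd, rfl, rfl⟩) | ⟨rfl, rfl⟩
    · have hlt := h₁.edge_lt a b hab
      simpa [DFG.seqComp, hlt.1, hlt.2] using h₁.flow a b hab
    · simpa [DFG.seqComp] using h₂.flow c d hcd
    · simpa [DFG.seqComp, h₁.vout_lt, h₁.output] using h₂.input
  meas := by
    intro v hv
    simp only [DFG.seqComp] at hv ⊢
    split_ifs with h
    · exact h₁.meas v h
    · exact h₂.meas _ (by omega)

theorem DFG.label_branch_left (sp jn : Label) (d₁ d₂ : Split) (G₁ G₂ : DFG) {a : ℕ}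
    (ha : a < G₁.n) : (DFG.branch sp jn d₁ d₂ G₁ G₂).label (a + 1) = G₁.label a := by
  simp [DFG.branch, ha]

theorem DFG.label_branch_right (sp jn : Label) (d₁ d₂ : Split) (G₁ G₂ : DFG) {a : ℕ}
    (ha : a < G₂.n) : (DFG.branch sp jn d₁ d₂ G₁ G₂).label (a + 1 + G₁.n) = G₂.label a := by
  have h₁ : ¬ a + 1 + G₁.n < G₁.n + 1 := by omega
  have h₂ : a + 1 + G₁.n < G₁.n + G₂.n + 1 := by omega
  have h₃ : a + 1 + G₁.n - 1 - G₁.n = a := by omega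
  have h₄ : a + 1 + G₁.n ≠ 0 := by omega
  simp only [DFG.branch, h₁, h₂, h₃, h₄, if_true, if_false]

theorem DFG.label_branch_join (sp jn : Label) (d₁ d₂ : Split) (G₁ G₂ : DFG) :
    (DFG.branch sp jn d₁ d₂ G₁ G₂).label (G₁.n + G₂.n + 1) = jn := by
  simp [DFG.branch]

theorem DFG.branch_cases (sp jn : Label) (d₁ d₂ : Split) (G₁ G₂ : DFG) {P : Label → Prop}
    (hsp : P sp) (hjn : P jn) (h₁ : ∀ v < G₁.n, P (G₁.label v))
    (h₂ : ∀ v < G₂.n, P (G₂.label v)) (v : ℕ) :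
    P ((DFG.branch sp jn d₁ d₂ G₁ G₂).label v) := by
  simp only [DFG.branch]
  split_ifs
  · exact hsp
  · exact h₁ _ (by omega)
  · exact h₂ _ (by omega)
  · exact hjn

theorem DFG.TracksTamper.branch {G₁ G₂ : DFG} {e e' e₁ e₂ : Evidence} {p : Place} {o : JoinOp}
    {d₁ d₂ : Split} (h₁ : G₁.TracksTamper (splitEv d₁ e) e₁)
    (h₂ : G₂.TracksTamper (splitEv d₂ e) e₂) (he' : tau e' = tau e₁ ∪ tau e₂) :
    (DFG.branch (.split p d₁ d₂ e) (.join p o e') d₁ d₂ G₁ G₂).TracksTamper e e' where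
  vin_lt := by simp [DFG.branch]
  vout_lt := by simp [DFG.branch]
  edge_lt := by
    intro a b hab
    have hv₁ := h₁.vout_lt
    have hv₂ := h₂.vout_lt
    have hi₁ := h₁.vin_lt
    have hi₂ := h₂.vin_lt
    simp only [DFG.branch, List.mem_append, List.mem_map, List.mem_cons, List.not_mem_nil,
      or_false, Prod.exists, Prod.mk.injEq, List.mem_ite_nil_right] at hab ⊢
    rcases hab with (((⟨c, d, hcd, rfl, rfl⟩ | ⟨c, d, hcd, rfl, rfl⟩) | ⟨-, rfl, rfl⟩) |
      ⟨-, rfl, rfl⟩) | ⟨rfl, rfl⟩ | ⟨rfl, rfl⟩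
    · have := h₁.edge_lt c d hcd
      omega
    · have := h₂.edge_lt c d hcd
      omega
    all_goals omega
  input := by simp [DFG.branch, Label.tamperStep, Label.evid]
  output := by
    change (DFG.label _ (G₁.n + G₂.n + 1)).evid = e'
    rw [DFG.label_branch_join, Label.evid]
  flow := by
    intro a b hab
    simp only [DFG.branch, List.mem_append, List.mem_map, List.mem_cons, List.not_mem_nil,
      or_false, Prod.exists, Prod.mk.injEq, List.mem_ite_nil_right] at hab
    rcases hab with (((⟨c, d, hcd, rfl, rfl⟩ | ⟨c, d, hcd, rfl, rfl⟩) | ⟨rfl, rfl, rfl⟩) |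
      ⟨rfl, rfl, rfl⟩) | ⟨rfl, rfl⟩ | ⟨rfl, rfl⟩
    · have hlt := h₁.edge_lt c d hcd
      rw [DFG.label_branch_left _ _ _ _ _ _ hlt.1, DFG.label_branch_left _ _ _ _ _ _ hlt.2]
      exact h₁.flow c d hcd
    · have hlt := h₂.edge_lt c d hcd
      rw [DFG.label_branch_right _ _ _ _ _ _ hlt.1, DFG.label_branch_right _ _ _ _ _ _ hlt.2]
      exact h₂.flow c d hcd
    · rw [DFG.label_branch_left _ _ _ _ _ _ h₁.vin_lt]
      exact h₁.input
    · rw [DFG.label_branch_right _ _ _ _ _ _ h₂.vin_lt]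
      exact h₂.input
    · rw [DFG.label_branch_left _ _ _ _ _ _ h₁.vout_lt, DFG.label_branch_join, h₁.output]
      simp [Label.tamperStep, Label.evid, he']
    · rw [DFG.label_branch_right _ _ _ _ _ _ h₂.vout_lt, DFG.label_branch_join, h₂.output]
      simp [Label.tamperStep, Label.evid, he']
  meas := fun v _ => DFG.branch_cases _ _ _ _ _ _
    (P := fun l => l.IsMeas → tau l.evid = Set.univ) (by simp [Label.IsMeas])
    (by simp [Label.IsMeas]) h₁.meas h₂.meas v

theorem tracksTamper_sem (t : Phrase) (p : Place) (φ : List ℕ) (e : Evidence) :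
    (sem t p φ e).TracksTamper e (eval t p φ e) := by
  induction t generalizing p φ e with
  | meas m q s => exact .single (Set.subset_univ _) rfl fun _ => rfl
  | copy => exact .single subset_rfl rfl (by simp [Label.IsMeas])
  | sign => exact .single subset_rfl rfl (by simp [Label.IsMeas])
  | hash => exact .single subset_rfl rfl (by simp [Label.IsMeas])
  | att q t ih =>
    exact .seqComp (.single subset_rfl rfl (by simp [Label.IsMeas]))
      ((ih q (1 :: φ) e).seqComp (.single subset_rfl rfl (by simp [Label.IsMeas])))
  | lseq t₁ t₂ ih₁ ih₂ => exact (ih₁ _ _ _).seqComp (ih₂ _ _ _)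
  | bseq d₁ d₂ t₁ t₂ ih₁ ih₂ => exact .branch (ih₁ _ _ _) (ih₂ _ _ _) rfl
  | bpar d₁ d₂ t₁ t₂ ih₁ ih₂ => exact .branch (ih₁ _ _ _) (ih₂ _ _ _) rfl

theorem DFG.TracksTamper.ts_take_subset {G : DFG} {e e' : Evidence} (hG : G.TracksTamper e e')
    {π : List ℕ} (hπ : G.IsPath π) {i v : ℕ} (hv : π[i]? = some v) :
    G.ts (π.take (i + 1)) ⊆ tau (G.label v).evid := by
  obtain ⟨-, hlt, hchain⟩ := hπ
  induction i generalizing v with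
  | zero =>
    cases π with
    | nil => simp at hv
    | cons a l =>
      obtain rfl : a = v := by simpa using hv
      have hm := hG.meas a (hlt a (by simp))
      simp only [zero_add, List.take_succ_cons, List.take_zero, DFG.ts, List.foldl_nil]
      split
      · next heq => rw [hm ⟨_, _, heq⟩]
      · exact Set.empty_subset _
  | succ i ih =>
    obtain ⟨hi, rfl⟩ := List.getElem?_eq_some_iff.mp hv
    have hi' : i < π.length := by omega
    rw [← List.take_concat_get' π (i + 1) hi,
      DFG.ts_append_singleton _ (by simp; rintro rfl; simp at hi)]
    exact (Label.tamperStep_mono (ih (List.getElem?_eq_getElem hi')) _).trans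
      (hG.flow _ _ (List.isChain_iff_getElem.mp hchain i hi))

theorem DFG.TracksTamper.protected_of_crossSafe {G : DFG} {e e' : Evidence}
    (hG : G.TracksTamper e e') (hsafe : G.CrossSafe) : G.Protected := by
  intro π hπ
  right
  intro i v _ _ hv hcross
  exact (hG.ts_take_subset hπ hv).trans
    (hsafe v (hπ.2.1 v (List.mem_of_getElem? hv)) hcross)

theorem DFG.CrossSafe.single {l : Label} (h : l.IsCross → tau l.evid ⊆ {l.place}) :
    (DFG.single l).CrossSafe :=
  fun _ _ => h

theorem DFG.CrossSafe.seqComp {G₁ G₂ : DFG} (h₁ : G₁.CrossSafe) (h₂ : G₂.CrossSafe) :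
    (G₁.seqComp G₂).CrossSafe := by
  intro v hv
  simp only [DFG.seqComp] at hv ⊢
  split_ifs with h
  · exact h₁ v h
  · exact h₂ _ (by omega)

theorem DFG.CrossSafe.branch {G₁ G₂ : DFG} (h₁ : G₁.CrossSafe) (h₂ : G₂.CrossSafe) (p : Place)
    (d₁ d₂ : Split) (e e' : Evidence) (o : JoinOp) :
    (DFG.branch (.split p d₁ d₂ e) (.join p o e') d₁ d₂ G₁ G₂).CrossSafe :=
  fun v _ => DFG.branch_cases _ _ _ _ _ _ (P := fun l => l.IsCross → tau l.evid ⊆ {l.place})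
    (by simp [Label.IsCross, Label.recvPlace]) (by simp [Label.IsCross, Label.recvPlace]) h₁ h₂ v

theorem DFG.CrossSafe.att {t : Phrase} {p q : Place} {φ : List ℕ} {e : Evidence}
    (ht : (sem t q (1 :: φ) e).CrossSafe) (hreq : p ≠ q → tau e ⊆ {p})
    (hrpy : q ≠ p → tau (eval t q (1 :: φ) e) ⊆ {q}) :
    (sem (.att q t) p φ e).CrossSafe :=
  .seqComp (.single hreq) (ht.seqComp (.single hrpy))

theorem DFG.CrossSafe.sign (p : Place) (φ : List ℕ) (e : Evidence) :
    (sem .sign p φ e).CrossSafe :=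
  .single fun h => absurd rfl h

theorem tau_splitEv_congr (d : Split) {e e' : Evidence} (h : tau e = tau e') :
    tau (splitEv d e) = tau (splitEv d e') := by
  cases d
  · exact h
  · rfl

/-- The tamper places of the resulting evidence depend only on the tamper places of the
initial evidence, and not on the position. -/
theorem tau_eval_congr (t : Phrase) (p : Place) (φ φ' : List ℕ) {e e' : Evidence}
    (h : tau e = tau e') : tau (eval t p φ e) = tau (eval t p φ' e') := by
  induction t generalizing p φ φ' e e' with
  | meas m q s => rfl
  | copy => exact h
  | sign => simp only [eval, tau, h]
  | hash => exact h
  | att q t ih => exact ih _ _ _ h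
  | lseq t₁ t₂ ih₁ ih₂ => exact ih₂ _ _ _ (ih₁ _ _ _ h)
  | bseq d₁ d₂ t₁ t₂ ih₁ ih₂ | bpar d₁ d₂ t₁ t₂ ih₁ ih₂ =>
    exact congrArg₂ _ (ih₁ _ _ _ (tau_splitEv_congr _ h)) (ih₂ _ _ _ (tau_splitEv_congr _ h))

theorem crossSafe_sem_epp (t : Phrase) (p : Place) (φ : List ℕ) {e e' : Evidence}
    (h : tau e = tau e') : (sem (epp t p e') p φ e).CrossSafe := by
  induction t generalizing p φ e e' with
  | meas m q s => exact .single fun h => absurd rfl h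
  | copy => exact .single fun h => absurd rfl h
  | sign => exact .sign _ _ _
  | hash => exact .single fun h => absurd rfl h
  | lseq t₁ t₂ ih₁ ih₂ => exact (ih₁ _ _ h).seqComp (ih₂ _ _ (tau_eval_congr _ _ _ _ h))
  | bseq d₁ d₂ t₁ t₂ ih₁ ih₂ | bpar d₁ d₂ t₁ t₂ ih₁ ih₂ =>
    exact .branch (ih₁ _ _ (tau_splitEv_congr _ h)) (ih₂ _ _ (tau_splitEv_congr _ h)) _ _ _ _ _ _
  | att q t ih =>
    have hs : tau (.sig e p) = tau (.sig e' p) := by simp only [tau, h]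
    rw [epp]
    split_ifs with hqp he hq hq
    · subst hqp
      exact .att (ih _ _ h) (fun hne => absurd rfl hne) (fun hne => absurd rfl hne)
    · exact .att (ih _ _ h) (fun _ => h.trans_subset he)
        fun _ => (tau_eval_congr _ _ _ _ h).trans_subset hq
    · exact .att ((ih _ _ h).seqComp (.sign _ _ _)) (fun _ => h.trans_subset he)
        fun _ => Set.inter_subset_left
    · exact .seqComp (.sign _ _ _) (.att (ih _ _ hs) (fun _ => Set.inter_subset_left)
        fun _ => (tau_eval_congr _ _ _ _ hs).trans_subset hq)
    · exact .seqComp (.sign _ _ _) (.att ((ih _ _ hs).seqComp (.sign _ _ _))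
        (fun _ => Set.inter_subset_left) fun _ => Set.inter_subset_left)

end Copland

open Copland in
/-- The Evidence Protection Program yields protected data flow graphs:
`C(epp(t,p,ξ),p,⟨⟩,ξ)` is protected. -/
theorem epp_protected (t : Phrase) (p : Place) :
    (sem (epp t p Evidence.empty) p [] Evidence.empty).Protected := by
  exact (tracksTamper_sem _ _ _ _).protected_of_crossSafe (crossSafe_sem_epp t p [] rfl)
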